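/- Persistence of photon loss: let n be a nonnegative bounded solution of the Kompaneets equation with initial data n₀ satisfying x² n₀(x) → 0 as x → ∞. Then there exists t* ∈ [0,∞] such that n(0,t) > 0 for every t > t* and n(0,t) = 0 for every t with 0 < t < t*. That is, once the boundary value n(0,·) becomes positive, it remains positive for all later times. -/

import Mathlib

/-!
In nondivergence form the equation reads `nₜ = x² nₓₓ + (x² + 2n) nₓ + (2x - 2) n`. The profile
`exp (-x)` is annihilated by `x² (∂ₓₓ + ∂ₓ)`, so if `n(·, t₀) ≥ c > 0` on `(0, δ]`, the function
`w = c exp (-(2c + 3)(t - t₀)) (exp (-x) - exp (-δ))` is a subsolution lying below `n` at `t = t₀`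
and at `x = δ`. Nothing has to be known at `x = 0`: the drift `x² + 2n` is nonnegative because
`n ≥ 0`, and so `w - ε ψ` with `ψ = 1 + log (δ / x)` is a strict subsolution wherever it is
nonnegative. It tends to `-∞` as `x → 0`, hence the parabolic comparison principle applies away
from the boundary and gives `w - ε ψ < n`. Letting `ε → 0` and then `x → 0` bounds `n(0, t)` below
by `c exp (-(2c + 3)(t - t₀)) (1 - exp (-δ)) > 0` for all `t ≥ t₀`, and `t*` is the infimum of the
times at which `n(0, ·)` is positive.
-/

open MeasureTheory Filter Set Real Topology

/-- The Kompaneets photon flux `J(x,u) = x² u'(x) + (x² - 2x) u(x) + u(x)²`. -/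
noncomputable def kompFlux (u : ℝ → ℝ) (x : ℝ) : ℝ :=
  x ^ 2 * deriv u x + (x ^ 2 - 2 * x) * u x + u x ^ 2

/-- A (global-in-time) nonnegative solution of the Kompaneets equation
`∂ₜ n = ∂ₓ J(x, n(·,t))` on `(0,∞) × (0,∞)` with initial data `n₀`:
nonnegative, bounded, `C^{2,1}` in the interior, attaining the initial data,
continuous into `L¹`, and with `x² n → 0` and `x² ∂ₓ n → 0` as `x → ∞`,
uniformly on the indicated time sets.  No boundary condition at `x = 0`. -/
structure IsKompSol (n : ℝ → ℝ → ℝ) (n₀ : ℝ → ℝ) : Prop where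
  nonneg : ∀ x t : ℝ, 0 < x → 0 < t → 0 ≤ n x t
  bounded : ∃ M : ℝ, ∀ x t : ℝ, 0 < x → 0 < t → n x t ≤ M
  init : ∀ x : ℝ, 0 < x → n x 0 = n₀ x
  contOn : ContinuousOn (fun p : ℝ × ℝ => n p.1 p.2)
    ((Set.Ioi (0:ℝ)) ×ˢ (Set.Ioi (0:ℝ)))
  diff_x : ∀ t : ℝ, 0 < t → ∀ x : ℝ, 0 < x → DifferentiableAt ℝ (fun y => n y t) x
  diff_xx : ∀ t : ℝ, 0 < t → ∀ x : ℝ, 0 < x →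
    DifferentiableAt ℝ (deriv (fun y => n y t)) x
  diff_t : ∀ x : ℝ, 0 < x → ∀ t : ℝ, 0 < t → DifferentiableAt ℝ (fun τ => n x τ) t
  pde : ∀ x : ℝ, 0 < x → ∀ t : ℝ, 0 < t →
    deriv (fun τ => n x τ) t = deriv (fun y => kompFlux (fun z => n z t) y) x
  l1init : Filter.Tendsto (fun t => ∫ x in Set.Ioi (0:ℝ), |n x t - n₀ x|)
    (𝓝[>] (0:ℝ)) (nhds 0)
  decay : ∀ T : ℝ, 0 < T → ∀ ε : ℝ, 0 < ε → ∃ R : ℝ, 0 < R ∧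
    ∀ x : ℝ, R ≤ x → ∀ t : ℝ, 0 ≤ t → t < T → x ^ 2 * n x t < ε
  decay' : ∀ T : ℝ, 0 < T → ∀ ε : ℝ, 0 < ε → ∃ R : ℝ, 0 < R ∧
    ∀ x : ℝ, R ≤ x → ∀ t : ℝ, 1 / x ^ 2 ≤ t → t < T →
      |x ^ 2 * deriv (fun y => n y t) x| < ε

lemma exists_threshold_of_monotoneOn {α γ : Type*} [LinearOrder α] [CompleteLinearOrder γ]
    {f : α → γ} {S : Set α} (hf : MonotoneOn f S) {P : α → Prop}
    (hP : ∀ s ∈ S, ∀ t ∈ S, s ≤ t → P s → P t) :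
    ∃ τ : γ, ∀ t ∈ S, (τ < f t → P t) ∧ (f t < τ → ¬ P t) := by
  refine ⟨sInf (f '' {s ∈ S | P s}), fun t ht => ⟨fun hlt => ?_, fun hlt hPt => ?_⟩⟩
  · obtain ⟨_, ⟨s, ⟨hs, hPs⟩, rfl⟩, hst⟩ := sInf_lt_iff.1 hlt
    exact hP s hs t ht (hf.reflect_lt hs ht hst).le hPs
  · exact notMem_of_lt_csInf hlt (OrderBot.bddBelow _) ⟨t, ⟨ht, hPt⟩, rfl⟩

lemma exists_first_zero {X : Type*} [TopologicalSpace X] [T2Space X] {K : Set X}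
    (hK : IsCompact K) {m : X → ℝ → ℝ} {t₀ T : ℝ}
    (hm : ContinuousOn (fun p : X × ℝ => m p.1 p.2) (K ×ˢ Icc t₀ T))
    (hinit : ∀ x ∈ K, 0 < m x t₀) {x : X} {t : ℝ} (hx : x ∈ K) (ht : t ∈ Icc t₀ T)
    (hneg : m x t ≤ 0) :
    ∃ y ∈ K, ∃ s ∈ Ioc t₀ T, m y s = 0 ∧ ∀ z ∈ K, ∀ r ∈ Icc t₀ s, 0 ≤ m z r := by
  have hKT : IsCompact (K ×ˢ Icc t₀ T) := hK.prod isCompact_Icc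
  have hcompact : IsCompact (K ×ˢ Icc t₀ T ∩ (fun p : X × ℝ => m p.1 p.2) ⁻¹' Iic 0) :=
    hKT.of_isClosed_subset (hm.preimage_isClosed_of_isClosed hKT.isClosed isClosed_Iic)
      inter_subset_left
  obtain ⟨⟨y, s⟩, ⟨⟨hy, hs⟩, hys⟩, hfirst⟩ :=
    hcompact.exists_isMinOn ⟨(x, t), ⟨hx, ht⟩, hneg⟩ continuousOn_snd
  have hs₀ : t₀ < s := hs.1.lt_of_ne fun h => (hinit y hy).not_ge (h ▸ hys)
  have hpos : ∀ z ∈ K, ∀ r ∈ Ico t₀ s, 0 < m z r := fun z hz r hr => by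
    by_contra! hle
    have hsr : s ≤ r := hfirst (a := (z, r)) ⟨⟨hz, hr.1, hr.2.le.trans hs.2⟩, hle⟩
    exact hr.2.not_ge hsr
  have hnonneg : ∀ z ∈ K, ∀ r ∈ Icc t₀ s, 0 ≤ m z r := fun z hz r hr => by
    have hmz : ContinuousOn (m z) (closure (Ico t₀ s)) := by
      rw [closure_Ico hs₀.ne]
      exact hm.comp (Continuous.prodMk_right z).continuousOn
        fun r hr => ⟨hz, hr.1, hr.2.trans hs.2⟩
    exact le_on_closure (fun r hr => (hpos z hz r hr).le) continuousOn_const hmz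
      (closure_Ico hs₀.ne ▸ hr)
  exact ⟨y, hy, s, ⟨hs₀, hs.2⟩, le_antisymm hys (hnonneg y hy s ⟨hs₀.le, le_rfl⟩), hnonneg⟩

section Extrema

variable {f : ℝ → ℝ} {x : ℝ}

lemma deriv_deriv_nonneg_of_isLocalMin (hf : IsLocalMin f x) (hc : ContinuousAt f x) :
    0 ≤ deriv (deriv f) x := by
  by_contra! hneg
  have hmax : IsLocalMax f x := isLocalMax_of_deriv_deriv_neg hneg hf.deriv_eq_zero hc
  have hconst : f =ᶠ[𝓝 x] fun _ => f x := by
    filter_upwards [hf, hmax] with y hmin hmax using le_antisymm hmax hmin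
  have hzero : deriv (deriv f) x = 0 := by simp [hconst.deriv.deriv_eq]
  exact hneg.ne hzero

lemma hasDerivAt_nonpos_of_isLocalMinOn_Iic {f' : ℝ} (hmin : IsLocalMinOn f (Iic x) x)
    (hf : HasDerivAt f f' x) : f' ≤ 0 := by
  have hcone : (x - 1) - x ∈ posTangentConeAt (Iic x) x :=
    sub_mem_posTangentConeAt_of_segment_subset
      ((convex_Iic x).segment_subset self_mem_Iic (sub_le_self x zero_le_one))
  have hle := hmin.hasFDerivWithinAt_nonneg hf.hasFDerivAt.hasFDerivWithinAt hcone
  simpa using hle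

end Extrema

section ParabolicComparison

/-- The function `u` of space and time has at `(x, t)` the derivatives occurring in a second-order
parabolic equation: `uₜ = ut`, `uₓ(·, t) = p` near `x`, and `uₓₓ = uxx`. -/
structure HasParabolicDerivAt (u : ℝ → ℝ → ℝ) (ut : ℝ) (p : ℝ → ℝ) (uxx x t : ℝ) : Prop where
  time : HasDerivAt (fun τ => u x τ) ut t
  space : ∀ᶠ y in 𝓝 x, HasDerivAt (fun z => u z t) (p y) y
  space_space : HasDerivAt p uxx x

/-- `u` is a classical supersolution of `uₜ = F(x, t, u, uₓ, uₓₓ)` at the point `(x, t)`. -/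
def IsSupersolutionAt (F : ℝ → ℝ → ℝ → ℝ → ℝ → ℝ) (u : ℝ → ℝ → ℝ) (x t : ℝ) : Prop :=
  ∃ ut p uxx, HasParabolicDerivAt u ut p uxx x t ∧ F x t (u x t) (p x) uxx ≤ ut

/-- `u` is a classical strict subsolution of `uₜ = F(x, t, u, uₓ, uₓₓ)` at the point `(x, t)`. -/
def IsStrictSubsolutionAt (F : ℝ → ℝ → ℝ → ℝ → ℝ → ℝ) (u : ℝ → ℝ → ℝ) (x t : ℝ) : Prop :=
  ∃ ut p uxx, HasParabolicDerivAt u ut p uxx x t ∧ ut < F x t (u x t) (p x) uxx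

namespace HasParabolicDerivAt

variable {u v : ℝ → ℝ → ℝ} {ut vt uxx vxx x t : ℝ} {p q : ℝ → ℝ}

lemma sub (hu : HasParabolicDerivAt u ut p uxx x t) (hv : HasParabolicDerivAt v vt q vxx x t) :
    HasParabolicDerivAt (fun y τ => u y τ - v y τ) (ut - vt) (fun y => p y - q y) (uxx - vxx)
      x t where
  time := hu.time.fun_sub hv.time
  space := by filter_upwards [hu.space, hv.space] with y hy hy' using hy.fun_sub hy'
  space_space := hu.space_space.fun_sub hv.space_space

lemma space_eq_zero_of_isLocalMin (hu : HasParabolicDerivAt u ut p uxx x t)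
    (hmin : IsLocalMin (fun z => u z t) x) : p x = 0 :=
  hmin.hasDerivAt_eq_zero hu.space.self_of_nhds

lemma space_space_nonneg_of_isLocalMin (hu : HasParabolicDerivAt u ut p uxx x t)
    (hmin : IsLocalMin (fun z => u z t) x) : 0 ≤ uxx := by
  have hp : deriv (fun z => u z t) =ᶠ[𝓝 x] p := hu.space.mono fun y hy => hy.deriv
  rw [← hu.space_space.deriv, ← hp.deriv_eq]
  exact deriv_deriv_nonneg_of_isLocalMin hmin hu.space.self_of_nhds.continuousAt

end HasParabolicDerivAt

variable {F : ℝ → ℝ → ℝ → ℝ → ℝ → ℝ} {u v : ℝ → ℝ → ℝ}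

lemma IsSupersolutionAt.not_touches_strictSubsolution
    (hF : ∀ x t r p, Monotone (F x t r p)) {x t : ℝ}
    (hu : IsSupersolutionAt F u x t) (hv : IsStrictSubsolutionAt F v x t) (heq : u x t = v x t)
    (hspace : IsLocalMin (fun z => u z t - v z t) x)
    (htime : IsLocalMinOn (fun τ => u x τ - v x τ) (Iic t) t) : False := by
  obtain ⟨ut, p, uxx, hu, hFu⟩ := hu
  obtain ⟨vt, q, vxx, hv, hFv⟩ := hv
  have hx : p x = q x := sub_eq_zero.1 ((hu.sub hv).space_eq_zero_of_isLocalMin hspace)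
  have hxx : vxx ≤ uxx := sub_nonneg.1 ((hu.sub hv).space_space_nonneg_of_isLocalMin hspace)
  have ht : ut ≤ vt := sub_nonpos.1 (hasDerivAt_nonpos_of_isLocalMinOn_Iic htime (hu.sub hv).time)
  have hlt : vt < vt := calc
    vt < F x t (v x t) (q x) vxx := hFv
    _ ≤ F x t (u x t) (p x) uxx := by rw [heq, hx]; exact hF x t _ _ hxx
    _ ≤ ut := hFu
    _ ≤ vt := ht
  exact hlt.false

theorem strictSubsolution_lt_supersolution (hF : ∀ x t r p, Monotone (F x t r p))
    {α β t₀ T : ℝ}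
    (hu : ContinuousOn (fun p : ℝ × ℝ => u p.1 p.2) (Icc α β ×ˢ Icc t₀ T))
    (hv : ContinuousOn (fun p : ℝ × ℝ => v p.1 p.2) (Icc α β ×ˢ Icc t₀ T))
    (hsuper : ∀ x ∈ Ioo α β, ∀ t ∈ Ioc t₀ T, IsSupersolutionAt F u x t)
    (hsub : ∀ x ∈ Ioo α β, ∀ t ∈ Ioc t₀ T, u x t = v x t → IsStrictSubsolutionAt F v x t)
    (hinit : ∀ x ∈ Icc α β, v x t₀ < u x t₀)
    (hleft : ∀ t ∈ Ioc t₀ T, v α t < u α t) (hright : ∀ t ∈ Ioc t₀ T, v β t < u β t)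
    {x t : ℝ} (hx : x ∈ Icc α β) (ht : t ∈ Icc t₀ T) : v x t < u x t := by
  by_contra! hneg
  obtain ⟨y, hy, s, hs, hzero, hnonneg⟩ := exists_first_zero (m := fun x t => u x t - v x t)
    isCompact_Icc (hu.sub hv) (fun x hx => sub_pos.2 (hinit x hx)) hx ht (sub_nonpos.2 hneg)
  have heq : u y s = v y s := sub_eq_zero.1 hzero
  have hαy : α < y := hy.1.lt_of_ne (by rintro rfl; exact (hleft s hs).ne' heq)
  have hyβ : y < β := hy.2.lt_of_ne (by rintro rfl; exact (hright s hs).ne' heq)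
  have hspace : IsLocalMin (fun z => u z s - v z s) y := by
    filter_upwards [Icc_mem_nhds hαy hyβ] with z hz
    exact hzero.trans_le (hnonneg z hz s ⟨hs.1.le, le_rfl⟩)
  have htime : IsLocalMinOn (fun τ => u y τ - v y τ) (Iic s) s := by
    filter_upwards [Icc_mem_nhdsLE hs.1] with r hr
    exact hzero.trans_le (hnonneg y hy r hr)
  exact (hsuper y ⟨hαy, hyβ⟩ s hs).not_touches_strictSubsolution hF
    (hsub y ⟨hαy, hyβ⟩ s hs heq) heq hspace htime

end ParabolicComparison

section Kompaneets

/-- The right-hand side `x² uₓₓ + (x² + 2u) uₓ + (2x - 2) u` of the Kompaneets equation in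
nondivergence form, with `r`, `p`, `q` standing for `u`, `uₓ`, `uₓₓ`. The time argument is a dummy
matching `IsSupersolutionAt`. -/
def kompRHS (x _t r p q : ℝ) : ℝ :=
  x ^ 2 * q + (x ^ 2 + 2 * r) * p + (2 * x - 2) * r

lemma monotone_kompRHS (x t r p : ℝ) : Monotone (kompRHS x t r p) := fun q q' hq => by
  unfold kompRHS
  gcongr

lemma deriv_kompFlux {u : ℝ → ℝ} {x : ℝ} (hu : DifferentiableAt ℝ u x)
    (hu' : DifferentiableAt ℝ (deriv u) x) (t : ℝ) :
    deriv (kompFlux u) x = kompRHS x t (u x) (deriv u x) (deriv (deriv u) x) := by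
  have hid := hasDerivAt_id' x
  have hflux := (((hid.fun_pow 2).fun_mul hu'.hasDerivAt).fun_add
    (((hid.fun_pow 2).fun_sub (hid.const_mul 2)).fun_mul hu.hasDerivAt)).fun_add
    (hu.hasDerivAt.fun_pow 2)
  refine hflux.deriv.trans ?_
  unfold kompRHS
  push_cast
  ring

/-- A nonnegative classical supersolution of the Kompaneets equation for `0 < x < X` and `t > 0`.
No condition is imposed at `x = 0`, at `x = X` or at `t = 0`. -/
structure IsNonnegKompSupersol (n : ℝ → ℝ → ℝ) (X : ℝ) : Prop where
  nonneg : ∀ x ∈ Ioo 0 X, ∀ t, 0 < t → 0 ≤ n x t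
  continuousOn : ContinuousOn (fun p : ℝ × ℝ => n p.1 p.2) (Ioo 0 X ×ˢ Ioi 0)
  isSupersolutionAt : ∀ x ∈ Ioo 0 X, ∀ t, 0 < t → IsSupersolutionAt kompRHS n x t

lemma IsKompSol.isNonnegKompSupersol {n : ℝ → ℝ → ℝ} {n₀ : ℝ → ℝ} (h : IsKompSol n n₀) (X : ℝ) :
    IsNonnegKompSupersol n X where
  nonneg x hx t ht := h.nonneg x t hx.1 ht
  continuousOn := h.contOn.mono (prod_mono_left Ioo_subset_Ioi_self)
  isSupersolutionAt x hx t ht := by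
    refine ⟨_, deriv fun y => n y t, _, ⟨(h.diff_t x hx.1 t ht).hasDerivAt, ?_,
      (h.diff_xx t ht x hx.1).hasDerivAt⟩, ?_⟩
    · filter_upwards [Ioi_mem_nhds hx.1] with y hy using (h.diff_x t ht y hy).hasDerivAt
    · exact ((h.pde x hx.1 t ht).trans
        (deriv_kompFlux (h.diff_x t ht x hx.1) (h.diff_xx t ht x hx.1) t)).ge

/-- The subsolution vanishing at `x = δ` whose limit at `x = 0` bounds the boundary value below.
Of its decay rate, `2 * c` pays for the drift term `2u uₓ` and `3` for the reaction term `-2u` and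
for the penalty `logPenalty`. -/
noncomputable def kompSubsol (c δ t₀ x t : ℝ) : ℝ :=
  c * exp (-(2 * c + 3) * (t - t₀)) * (exp (-x) - exp (-δ))

/-- The penalty `1 + log (δ / x)`, singular at `x = 0`, which replaces a boundary condition there.
The quotient is split so that the derivatives in `x` are read off directly. -/
noncomputable def logPenalty (δ x : ℝ) : ℝ :=
  1 + log δ - log x

variable {c δ ε t₀ x t : ℝ}

lemma kompSubsol_self (c δ t₀ t : ℝ) : kompSubsol c δ t₀ δ t = 0 := by
  simp [kompSubsol]

lemma mul_exp_neg_mul_sub_mul_le_self {k y : ℝ} (hk : 0 ≤ k) (hc : 0 ≤ c) (ht : t₀ ≤ t)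
    (hy : y ≤ 1) : c * exp (-k * (t - t₀)) * y ≤ c := by
  have hdecay : exp (-k * (t - t₀)) ≤ 1 := exp_le_one_iff.2
    (mul_nonpos_of_nonpos_of_nonneg (neg_nonpos.2 hk) (sub_nonneg.2 ht))
  calc
    c * exp (-k * (t - t₀)) * y ≤ c * exp (-k * (t - t₀)) :=
      mul_le_of_le_one_right (by positivity) hy
    _ ≤ c := mul_le_of_le_one_right hc hdecay

lemma kompSubsol_le_const (hc : 0 ≤ c) (hx : 0 ≤ x) (ht : t₀ ≤ t) :
    kompSubsol c δ t₀ x t ≤ c := by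
  have hprofile : exp (-x) - exp (-δ) ≤ 1 :=
    (sub_le_self _ (exp_pos _).le).trans (exp_le_one_iff.2 (neg_nonpos.2 hx))
  exact mul_exp_neg_mul_sub_mul_le_self (by positivity) hc ht hprofile

lemma one_le_logPenalty (hx : 0 < x) (hxδ : x ≤ δ) : 1 ≤ logPenalty δ x := by
  have := log_le_log hx hxδ
  unfold logPenalty
  linarith

lemma tendsto_logPenalty_nhdsGT_zero (δ : ℝ) : Tendsto (logPenalty δ) (𝓝[>] 0) atTop :=
  tendsto_atTop_add_const_left _ _ (tendsto_neg_atBot_atTop.comp tendsto_log_nhdsGT_zero)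

lemma hasParabolicDerivAt_kompSubsol (c δ t₀ x t : ℝ) :
    HasParabolicDerivAt (kompSubsol c δ t₀) (-(2 * c + 3) * kompSubsol c δ t₀ x t)
      (fun y => -(c * exp (-(2 * c + 3) * (t - t₀)) * exp (-y)))
      (c * exp (-(2 * c + 3) * (t - t₀)) * exp (-x)) x t where
  time := by
    have h := ((((hasDerivAt_id' t).sub_const t₀).const_mul (-(2 * c + 3))).exp.const_mul
      c).mul_const (exp (-x) - exp (-δ))
    refine h.congr_deriv ?_
    unfold kompSubsol
    ring
  space := .of_forall fun y => by
    have h := ((hasDerivAt_neg' y).exp.sub_const (exp (-δ))).const_mul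
      (c * exp (-(2 * c + 3) * (t - t₀)))
    exact h.congr_deriv (by ring)
  space_space := by
    have h := ((hasDerivAt_neg' x).exp.const_mul (c * exp (-(2 * c + 3) * (t - t₀)))).fun_neg
    exact h.congr_deriv (by ring)

lemma hasParabolicDerivAt_mul_logPenalty (ε δ t : ℝ) (hx : 0 < x) :
    HasParabolicDerivAt (fun y _ => ε * logPenalty δ y) 0 (fun y => ε * -y⁻¹) (ε / x ^ 2)
      x t where
  time := hasDerivAt_const t _
  space := by
    filter_upwards [Ioi_mem_nhds hx] with y hy
    exact ((hasDerivAt_log hy.ne').const_sub (1 + log δ)).const_mul ε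
  space_space := by
    have h := (hasDerivAt_inv hx.ne').fun_neg.const_mul ε
    exact h.congr_deriv (by ring)

lemma isStrictSubsolutionAt_kompSubsol_sub (hc : 0 ≤ c) (hε : 0 < ε) (hx : 0 < x) (hxδ : x ≤ δ)
    (ht : t₀ ≤ t) (hnonneg : 0 ≤ kompSubsol c δ t₀ x t - ε * logPenalty δ x) :
    IsStrictSubsolutionAt kompRHS
      (fun y τ => kompSubsol c δ t₀ y τ - ε * logPenalty δ y) x t := by
  refine ⟨_, _, _, (hasParabolicDerivAt_kompSubsol c δ t₀ x t).sub
    (hasParabolicDerivAt_mul_logPenalty ε δ t hx), ?_⟩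
  set a := c * exp (-(2 * c + 3) * (t - t₀)) * exp (-x)
  set w := kompSubsol c δ t₀ x t
  set r := w - ε * logPenalty δ x
  have hrw : r ≤ w - ε :=
    sub_le_sub_left (le_mul_of_one_le_right hε.le (one_le_logPenalty hx hxδ)) w
  have ha : a ≤ c := mul_exp_neg_mul_sub_mul_le_self (by positivity) hc ht
    (exp_le_one_iff.2 (neg_nonpos.2 hx.le))
  have hdrift : 2 * (r * a) ≤ 2 * c * w := calc
    2 * (r * a) ≤ 2 * (w * c) := by gcongr <;> linarith
    _ = 2 * c * w := by ring
  have hrhs : kompRHS x t r (-a - ε * -x⁻¹) (a - ε / x ^ 2)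
      = -ε + ε * x - 2 * (r * a) + 2 * r * ε / x + 2 * x * r - 2 * r := by
    unfold kompRHS
    field_simp
    ring
  have hεx : 0 < ε * x := by positivity
  have hinward : 0 ≤ 2 * r * ε / x := by positivity
  have hgain : 0 ≤ 2 * x * r := by positivity
  change -(2 * c + 3) * w - 0 < kompRHS x t r (-a - ε * -x⁻¹) (a - ε / x ^ 2)
  linarith

lemma continuousOn_kompSubsol_sub {S : Set (ℝ × ℝ)} (hS : ∀ p ∈ S, 0 < p.1) :
    ContinuousOn (fun p : ℝ × ℝ => kompSubsol c δ t₀ p.1 p.2 - ε * logPenalty δ p.1) S := by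
  have hlog : ContinuousOn (fun p : ℝ × ℝ => log p.1) S :=
    continuousOn_fst.log fun p hp => (hS p hp).ne'
  unfold kompSubsol logPenalty
  fun_prop

namespace IsNonnegKompSupersol

variable {n : ℝ → ℝ → ℝ} {X : ℝ}

lemma kompSubsol_sub_lt (h : IsNonnegKompSupersol n X) (hc : 0 ≤ c) (hε : 0 < ε) (hδX : δ < X)
    (ht₀ : 0 < t₀) (hstart : ∀ x ∈ Ioc 0 δ, c ≤ n x t₀) (hx : x ∈ Ioc 0 δ) (ht : t₀ ≤ t) :
    kompSubsol c δ t₀ x t - ε * logPenalty δ x < n x t := by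
  obtain ⟨α, hcα, hα0, hαx⟩ : ∃ α, c < ε * logPenalty δ α ∧ α ∈ Ioo 0 x :=
    ((((tendsto_logPenalty_nhdsGT_zero δ).const_mul_atTop hε).eventually_gt_atTop c).and
      (Ioo_mem_nhdsGT hx.1)).exists
  have hα : ∀ y ∈ Icc α δ, y ∈ Ioc 0 δ := fun y hy => ⟨hα0.trans_le hy.1, hy.2⟩
  have hpenalty : ∀ y ∈ Ioc 0 δ, 0 < ε * logPenalty δ y := fun y hy =>
    mul_pos hε (zero_lt_one.trans_le (one_le_logPenalty hy.1 hy.2))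
  have hX : ∀ y ∈ Icc α δ, y ∈ Ioo 0 X := fun y hy => ⟨(hα y hy).1, hy.2.trans_lt hδX⟩
  have hαδ : α ≤ δ := hαx.le.trans hx.2
  refine strictSubsolution_lt_supersolution
    (v := fun y s => kompSubsol c δ t₀ y s - ε * logPenalty δ y) monotone_kompRHS
    (h.continuousOn.mono (prod_mono hX fun s hs => ht₀.trans_le hs.1))
    (continuousOn_kompSubsol_sub fun p hp => (hα p.1 hp.1).1)
    (fun y hy s hs => h.isSupersolutionAt y (hX y (Ioo_subset_Icc_self hy)) s (ht₀.trans hs.1))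
    (fun y hy s hs heq => ?_) (fun y hy => ?_) (fun s hs => ?_) (fun s hs => ?_)
    ⟨hαx.le, hx.2⟩ ⟨ht, le_rfl⟩
  · exact isStrictSubsolutionAt_kompSubsol_sub hc hε (hα0.trans hy.1) hy.2.le hs.1.le
      (heq ▸ h.nonneg y (hX y (Ioo_subset_Icc_self hy)) s (ht₀.trans hs.1))
  · have hw : kompSubsol c δ t₀ y t₀ ≤ c := kompSubsol_le_const hc (hα y hy).1.le le_rfl
    linarith [hstart y (hα y hy), hpenalty y (hα y hy)]
  · have hw : kompSubsol c δ t₀ α s ≤ c := kompSubsol_le_const hc hα0.le hs.1.le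
    linarith [h.nonneg α (hX α ⟨le_rfl, hαδ⟩) s (ht₀.trans hs.1)]
  · have hδ : δ ∈ Icc α δ := ⟨hαδ, le_rfl⟩
    linarith [kompSubsol_self c δ t₀ s, hpenalty δ (hα δ hδ),
      h.nonneg δ (hX δ hδ) s (ht₀.trans hs.1)]

lemma kompSubsol_le (h : IsNonnegKompSupersol n X) (hc : 0 ≤ c) (hδX : δ < X) (ht₀ : 0 < t₀)
    (hstart : ∀ x ∈ Ioc 0 δ, c ≤ n x t₀) (hx : x ∈ Ioc 0 δ) (ht : t₀ ≤ t) :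
    kompSubsol c δ t₀ x t ≤ n x t := by
  have hψ : 0 < logPenalty δ x := zero_lt_one.trans_le (one_le_logPenalty hx.1 hx.2)
  refine le_of_forall_sub_le fun η hη => ?_
  have hlt := h.kompSubsol_sub_lt hc (div_pos hη hψ) hδX ht₀ hstart hx ht
  rw [div_mul_cancel₀ η hψ.ne'] at hlt
  exact hlt.le

lemma boundary_nonneg (h : IsNonnegKompSupersol n X) (hX : 0 < X) (ht : 0 < t) {y : ℝ}
    (hy : Tendsto (fun x => n x t) (𝓝[>] 0) (𝓝 y)) : 0 ≤ y := by
  refine ge_of_tendsto hy ?_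
  filter_upwards [Ioo_mem_nhdsGT hX] with x hx using h.nonneg x hx t ht

lemma boundary_pos_of_le (h : IsNonnegKompSupersol n X) (hX : 0 < X) (ht₀ : 0 < t₀)
    (ht : t₀ ≤ t) {y₀ y : ℝ} (hy₀ : Tendsto (fun x => n x t₀) (𝓝[>] 0) (𝓝 y₀))
    (hy : Tendsto (fun x => n x t) (𝓝[>] 0) (𝓝 y)) (hpos : 0 < y₀) : 0 < y := by
  obtain ⟨c, hc, hcy₀⟩ := exists_between hpos
  obtain ⟨δ, hδ0, hstart⟩ := mem_nhdsGT_iff_exists_Ioc_subset.1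
    (inter_mem (hy₀.eventually (lt_mem_nhds hcy₀)) (Ioo_mem_nhdsGT hX))
  have hδX : δ < X := (hstart ⟨hδ0, le_rfl⟩).2.2
  have hlim : Tendsto (fun x => kompSubsol c δ t₀ x t) (𝓝[>] 0) (𝓝 (kompSubsol c δ t₀ 0 t)) := by
    have hcont : Continuous fun x => kompSubsol c δ t₀ x t := by
      unfold kompSubsol
      fun_prop
    exact (hcont.tendsto 0).mono_left nhdsWithin_le_nhds
  have hle : kompSubsol c δ t₀ 0 t ≤ y := le_of_tendsto_of_tendsto hlim hy <| by
    filter_upwards [Ioc_mem_nhdsGT hδ0] with x hx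
    exact h.kompSubsol_le hc.le hδX ht₀ (fun z hz => (hstart hz).1.le) hx ht
  have hsubsol : 0 < kompSubsol c δ t₀ 0 t :=
    mul_pos (by positivity) (sub_pos.2 (exp_lt_exp.2 (neg_lt_neg hδ0)))
  exact hsubsol.trans_le hle

end IsNonnegKompSupersol

end Kompaneets

theorem persistence_of_photon_loss_general {n : ℝ → ℝ → ℝ} {X : ℝ} (hX : 0 < X)
    (h : IsNonnegKompSupersol n X) {b : ℝ → ℝ}
    (hb : ∀ t : ℝ, 0 < t → Tendsto (fun x => n x t) (𝓝[>] 0) (𝓝 (b t))) :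
    ∃ tstar : ENNReal, ∀ t : ℝ, 0 < t →
      ((tstar < ENNReal.ofReal t → 0 < b t) ∧ (ENNReal.ofReal t < tstar → b t = 0)) := by
  have hpersist : ∀ s ∈ Ioi (0 : ℝ), ∀ t ∈ Ioi (0 : ℝ), s ≤ t → 0 < b s → 0 < b t :=
    fun s hs t ht hst => h.boundary_pos_of_le hX hs hst (hb s hs) (hb t ht)
  obtain ⟨tstar, htstar⟩ :=
    exists_threshold_of_monotoneOn (ENNReal.ofReal_mono.monotoneOn _) hpersist
  refine ⟨tstar, fun t ht => ⟨(htstar t ht).1, fun hlt => ?_⟩⟩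
  exact le_antisymm (not_lt.1 ((htstar t ht).2 hlt)) (h.boundary_nonneg hX ht (hb t ht))

theorem persistence_of_photon_loss
    (n : ℝ → ℝ → ℝ) (n₀ : ℝ → ℝ)
    (hsol : IsKompSol n n₀)
    (h0nonneg : ∀ x : ℝ, 0 < x → 0 ≤ n₀ x)
    (h0bdd : ∃ C : ℝ, ∀ x : ℝ, 0 < x → n₀ x ≤ C)
    (h0decay : Filter.Tendsto (fun x => x ^ 2 * n₀ x) Filter.atTop (nhds 0))
    (b : ℝ → ℝ)
    (hb : ∀ t : ℝ, 0 < t →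
      Filter.Tendsto (fun x => n x t) (𝓝[>] (0:ℝ)) (nhds (b t)))
    :
    ∃ tstar : ENNReal, ∀ t : ℝ, 0 < t →
      ((tstar < ENNReal.ofReal t → 0 < b t) ∧
       (ENNReal.ofReal t < tstar → b t = 0)) :=
  persistence_of_photon_loss_general one_pos (hsol.isNonnegKompSupersol 1) hb
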